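/- Let n ≥ 2, m ≥ 1, and let H be a Hankel tensor of order m and dimension n with parameter vector h ∈ ℂ^{d+1}, d = (n−1)m. Then brank_V(H) = brank_S(h), the border Waring rank of the associated binary form h(x,y). -/

import Mathlib

open scoped BigOperators
open MvPolynomial

noncomputable section

/-- An order-`m`, dimension-`n` complex tensor. -/
abbrev Tensor (m n : ℕ) := (Fin m → Fin n) → ℂ

/-- Tensors expressible as a sum of `r` rank-one tensors. -/
def cpSet (m n r : ℕ) : Set (Tensor m n) :=
  {T | ∃ u : Fin r → Fin m → Fin n → ℂ, ∀ i, T i = ∑ k, ∏ j, u k j (i j)}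

/-- Tensors expressible as a sum of `r` symmetric rank-one tensors. -/
def symSet (m n r : ℕ) : Set (Tensor m n) :=
  {T | ∃ v : Fin r → Fin n → ℂ, ∀ i, T i = ∑ k, ∏ j, v k (i j)}

/-- The Vandermonde vector `v(a,b) ∈ ℂ^n`, `v(a,b)_i = a^(n-1-i) * b^i`. -/
def vand (n : ℕ) (a b : ℂ) : Fin n → ℂ := fun i => a ^ (n - 1 - (i : ℕ)) * b ^ (i : ℕ)

/-- Tensors expressible as a sum of `r` Vandermonde rank-one tensors. -/
def vandSet (m n r : ℕ) : Set (Tensor m n) :=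
  {T | ∃ ab : Fin r → ℂ × ℂ, ∀ i, T i = ∑ k, ∏ j, vand n (ab k).1 (ab k).2 (i j)}

/-- The cp rank of a tensor. -/
def cpRank {m n : ℕ} (T : Tensor m n) : ℕ := sInf {r | T ∈ cpSet m n r}

/-- The symmetric rank of a tensor. -/
def symRank {m n : ℕ} (T : Tensor m n) : ℕ := sInf {r | T ∈ symSet m n r}

/-- The Vandermonde rank of a tensor. -/
def vandRank {m n : ℕ} (T : Tensor m n) : ℕ := sInf {r | T ∈ vandSet m n r}

/-- The border rank of a tensor (closure in the product topology). -/
def brank {m n : ℕ} (T : Tensor m n) : ℕ := sInf {r | T ∈ closure (cpSet m n r)}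

/-- The symmetric border rank of a tensor. -/
def bSymRank {m n : ℕ} (T : Tensor m n) : ℕ := sInf {r | T ∈ closure (symSet m n r)}

/-- The border Vandermonde rank of a tensor. -/
def bVandRank {m n : ℕ} (T : Tensor m n) : ℕ := sInf {r | T ∈ closure (vandSet m n r)}

/-- `T` is the Hankel tensor with parameter vector `h ∈ ℂ^{(n-1)m+1}`. -/
def IsHankel {m n : ℕ} (T : Tensor m n) (h : Fin ((n - 1) * m + 1) → ℂ) : Prop :=
  ∀ i : Fin m → Fin n, T i = h ⟨∑ j, (i j : ℕ), by
    have h1 : ∑ j, (i j : ℕ) ≤ ∑ _j : Fin m, (n - 1) :=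
      Finset.sum_le_sum fun j _ => Nat.le_pred_of_lt (i j).isLt
    simp only [Finset.sum_const, Finset.card_univ, Fintype.card_fin, smul_eq_mul] at h1
    exact Nat.lt_succ_of_le (h1.trans (le_of_eq (Nat.mul_comm m (n - 1))))⟩

/-- The `(d-r+1) × (r+1)` Hankel (catalecticant) matrix `C_{d-r,r}(h)` of `h ∈ ℂ^{d+1}`. -/
def hMat (d r : ℕ) (h : Fin (d + 1) → ℂ) : Matrix (Fin (d - r + 1)) (Fin (r + 1)) ℂ :=
  Matrix.of fun i j => if hij : (i : ℕ) + (j : ℕ) < d + 1 then h ⟨(i : ℕ) + (j : ℕ), hij⟩ else 0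

/-- The binary form `f(x,y) = f_0 x^r + f_1 x^(r-1) y + ⋯ + f_r y^r`. -/
def binForm (r : ℕ) (f : Fin (r + 1) → ℂ) : MvPolynomial (Fin 2) ℂ :=
  ∑ j : Fin (r + 1), C (f j) * X 0 ^ (r - (j : ℕ)) * X 1 ^ (j : ℕ)

/-- The binary form `h(x,y) = ∑_j binom(d,j) h_j x^j y^(d-j)` associated with `h ∈ ℂ^{d+1}`. -/
def assocForm (d : ℕ) (h : Fin (d + 1) → ℂ) : MvPolynomial (Fin 2) ℂ :=
  ∑ j : Fin (d + 1), C ((d.choose (j : ℕ) : ℂ) * h j) * X 0 ^ (j : ℕ) * X 1 ^ (d - (j : ℕ))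

/-- Parameter vectors of binary forms of Waring rank at most `r`. -/
def waringSet (d r : ℕ) : Set (Fin (d + 1) → ℂ) :=
  {h | ∃ ab : Fin r → ℂ × ℂ,
    assocForm d h = ∑ i, (C (ab i).1 * X 0 + C (ab i).2 * X 1) ^ d}

/-- The Waring rank of the binary form associated with `h`. -/
def waringRank (d : ℕ) (h : Fin (d + 1) → ℂ) : ℕ := sInf {r | h ∈ waringSet d r}

/-- The border Waring rank of the binary form associated with `h`. -/
def bWaringRank (d : ℕ) (h : Fin (d + 1) → ℂ) : ℕ := sInf {r | h ∈ closure (waringSet d r)}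

lemma C_mul_X_pow_mul_X_pow (c : ℂ) (a b : ℕ) :
    (C c * X 0 ^ a * X 1 ^ b : MvPolynomial (Fin 2) ℂ) =
      monomial (Finsupp.single 0 a + Finsupp.single 1 b) c := by
  rw [X_pow_eq_monomial, X_pow_eq_monomial, C_mul_monomial, monomial_mul, mul_one, mul_one]

lemma coeff_assocForm (d : ℕ) (h : Fin (d + 1) → ℂ) (j : Fin (d + 1)) :
    coeff (Finsupp.single 0 (j : ℕ) + Finsupp.single 1 (d - (j : ℕ))) (assocForm d h) =
      (d.choose (j : ℕ) : ℂ) * h j := by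
  simp only [assocForm, C_mul_X_pow_mul_X_pow, coeff_sum, coeff_monomial]
  rw [Finset.sum_eq_single j]
  · simp
  · intro k _ hk
    refine if_neg fun heq => hk (Fin.ext ?_)
    simpa using DFunLike.congr_fun heq 0
  · simp

lemma assocForm_injective (d : ℕ) : Function.Injective (assocForm d) := by
  intro g h hgh
  funext j
  have hc := congrArg
    (coeff (Finsupp.single 0 (j : ℕ) + Finsupp.single 1 (d - (j : ℕ)))) hgh
  rw [coeff_assocForm, coeff_assocForm] at hc
  have hj : (d.choose (j : ℕ) : ℂ) ≠ 0 := by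
    exact_mod_cast (Nat.choose_pos (Nat.lt_succ_iff.mp j.isLt)).ne'
  exact mul_left_cancel₀ hj hc

/-- The parameter vector of a sum of `d`-th powers of linear forms. -/
lemma assocForm_sum_pow (d r : ℕ) (ab : Fin r → ℂ × ℂ) :
    assocForm d (fun j => ∑ i, (ab i).1 ^ (j : ℕ) * (ab i).2 ^ (d - (j : ℕ))) =
      ∑ i, (C (ab i).1 * X 0 + C (ab i).2 * X 1) ^ d := by
  simp only [assocForm, add_pow, Finset.mul_sum, map_sum, Finset.sum_mul]
  rw [Finset.sum_comm]
  refine Finset.sum_congr rfl fun i _ => ?_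
  rw [Finset.sum_range]
  refine Finset.sum_congr rfl fun j _ => ?_
  simp only [map_mul, map_pow, mul_pow, map_natCast]
  ring

lemma mem_waringSet_iff (d r : ℕ) (h : Fin (d + 1) → ℂ) :
    h ∈ waringSet d r ↔ ∃ ab : Fin r → ℂ × ℂ,
      ∀ j : Fin (d + 1), h j = ∑ i, (ab i).1 ^ (j : ℕ) * (ab i).2 ^ (d - (j : ℕ)) := by
  refine exists_congr fun ab => ?_
  rw [← assocForm_sum_pow, (assocForm_injective d).eq_iff, funext_iff]

lemma sum_val_le {m n : ℕ} (i : Fin m → Fin n) : ∑ j, (i j : ℕ) ≤ (n - 1) * m := by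
  calc ∑ j, (i j : ℕ) ≤ ∑ _j : Fin m, (n - 1) :=
        Finset.sum_le_sum fun j _ => Nat.le_pred_of_lt (i j).isLt
    _ = (n - 1) * m := by simp [Nat.mul_comm]

/-- The Hankel tensor with a given parameter vector. -/
def hankelTensor (m n : ℕ) (h : Fin ((n - 1) * m + 1) → ℂ) : Tensor m n :=
  fun i => h ⟨∑ j, (i j : ℕ), Nat.lt_succ_of_le (sum_val_le i)⟩

lemma prod_vand {m n : ℕ} (a b : ℂ) (i : Fin m → Fin n) :
    ∏ j, vand n a b (i j) =
      a ^ ((n - 1) * m - ∑ j, (i j : ℕ)) * b ^ (∑ j, (i j : ℕ)) := by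
  simp only [vand, Finset.prod_mul_distrib, Finset.prod_pow_eq_pow_sum]
  congr 2
  have hsum : ∑ j, (n - 1 - (i j : ℕ)) + ∑ j, (i j : ℕ) = (n - 1) * m := by
    rw [← Finset.sum_add_distrib,
      Finset.sum_congr rfl fun j _ => Nat.sub_add_cancel (Nat.le_sub_one_of_lt (i j).isLt)]
    simp [Nat.mul_comm]
  omega

/-- Every `s ≤ (n - 1) * m` is the sum of the entries of some multi-index. -/
lemma exists_sum_val_eq {n : ℕ} (hn : 1 ≤ n) (m s : ℕ) (hs : s ≤ (n - 1) * m) :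
    ∃ i : Fin m → Fin n, ∑ j, (i j : ℕ) = s := by
  induction m generalizing s with
  | zero => exact ⟨Fin.elim0, by simpa [eq_comm] using hs⟩
  | succ m ih =>
    rw [Nat.mul_succ] at hs
    obtain ⟨i, hi⟩ := ih (s - min s (n - 1)) (by omega)
    refine ⟨Fin.cons ⟨min s (n - 1), by omega⟩ i, ?_⟩
    rw [Fin.sum_univ_succ]
    simp only [Fin.cons_zero, Fin.cons_succ, hi]
    omega

lemma hankelTensor_mem_vandSet {m n r : ℕ} {h : Fin ((n - 1) * m + 1) → ℂ}
    (hh : h ∈ waringSet ((n - 1) * m) r) : hankelTensor m n h ∈ vandSet m n r := by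
  obtain ⟨ab, hab⟩ := (mem_waringSet_iff _ _ _).mp hh
  refine ⟨fun k => (ab k).swap, fun i => ?_⟩
  simp only [hankelTensor, hab, prod_vand, Prod.fst_swap, Prod.snd_swap]
  exact Finset.sum_congr rfl fun k _ => mul_comm _ _

/-- Reading off the parameter vector along multi-indices `σ s` of sum `s` sends tensors of
Vandermonde rank at most `r` to parameter vectors of Waring rank at most `r`. -/
lemma comp_mem_waringSet {m n r : ℕ} {σ : Fin ((n - 1) * m + 1) → Fin m → Fin n}
    (hσ : ∀ s, ∑ j, (σ s j : ℕ) = s) {T : Tensor m n} (hT : T ∈ vandSet m n r) :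
    T ∘ σ ∈ waringSet ((n - 1) * m) r := by
  obtain ⟨ab, hab⟩ := hT
  refine (mem_waringSet_iff _ _ _).mpr ⟨fun k => (ab k).swap, fun s => ?_⟩
  simp only [Function.comp_apply, hab, prod_vand, hσ, Prod.fst_swap, Prod.snd_swap]
  exact Finset.sum_congr rfl fun k _ => mul_comm _ _

lemma continuous_hankelTensor (m n : ℕ) : Continuous (hankelTensor m n) :=
  continuous_pi fun _ => continuous_apply _

/-- For a Hankel tensor `H` with parameter vector `h`,
`brank_V(H)` equals the border Waring rank of the associated binary form of `h`. -/
theorem stmt_4 (n m : ℕ) (hn : 2 ≤ n) (hm : 1 ≤ m)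
    (H : Tensor m n) (h : Fin ((n - 1) * m + 1) → ℂ) (hH : IsHankel H h) :
    bVandRank H = bWaringRank ((n - 1) * m) h := by
  have hHΦ : H = hankelTensor m n h := funext hH
  choose σ hσ using fun s : Fin ((n - 1) * m + 1) =>
    exists_sum_val_eq (by omega : 1 ≤ n) m s (Nat.lt_succ_iff.mp s.isLt)
  have hHσ : H ∘ σ = h := by
    funext s
    simp only [hHΦ, hankelTensor, Function.comp_apply, hσ]
  have hcont : Continuous fun T : Tensor m n => T ∘ σ :=
    continuous_pi fun s => continuous_apply (σ s)
  unfold bVandRank bWaringRank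
  congr 1
  ext r
  constructor
  · intro hr
    have := map_mem_closure hcont hr fun _ hT => comp_mem_waringSet hσ hT
    rwa [hHσ] at this
  · intro hr
    have := map_mem_closure (continuous_hankelTensor m n) hr
      fun _ hh => hankelTensor_mem_vandSet hh
    rwa [← hHΦ] at this
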